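/- Let d ≥ 2 and let h : ℝ^d → ℝ be continuously differentiable. Suppose that for all v, v_* ∈ ℝ^d the vector √(μ(v_*))·(∇h(v) + v h(v)) − √(μ(v))·(∇h(v_*) + v_* h(v_*)) ∈ ℝ^d is a scalar multiple of v − v_*. Then there exist a, c ∈ ℝ and b ∈ ℝ^d such that h(v) = √(μ(v)) (a + b·v + c|v|²) for all v ∈ ℝ^d. -/

import Mathlib

/-! Set `g = h / √μ`. Since `∇√μ = -v √μ`, one has `∇g = (∇h + v h) / √μ`, so dividing the
hypothesis by `√μ(v) √μ(w)` says that `∇g(v) - ∇g(w)` is parallel to `v - w` for all `v, w`.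
In dimension at least two this forces `∇g(v) = ∇g(0) + c v`
(`exists_eq_add_smul_of_parallel`): writing `∇g(v) - ∇g(0) = l(v) v`, linear independence of
`v, w` gives `l(v) = l(w)`, and two dependent nonzero vectors are compared through a third one.
Hence `g - ∇g(0)·v - (c/2)|v|²` has zero derivative and is constant.

The constant factor of `√μ` is kept out of the calculus: the proof works with
`h e^{|v|²/2}` (`hasFDerivAt_mul_exp`), a multiple of `g`. -/

open MeasureTheory
open scoped InnerProductSpace

/-- The normalized Maxwellian `μ(v) = π^{-d/2} e^{-|v|²}` on `ℝ^d`. -/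
noncomputable def maxw (d : ℕ) (v : EuclideanSpace ℝ (Fin d)) : ℝ :=
  Real.pi ^ (-(d : ℝ) / 2) * Real.exp (-‖v‖ ^ 2)

/-- Linear algebra behind the theorem: in dimension at least two, a map whose increments are all
parallel to the increments of the argument is affine with scalar linear part. No regularity is
needed. -/
theorem exists_eq_add_smul_of_parallel {E : Type*} [AddCommGroup E] [Module ℝ E]
    (hE : 1 < Module.finrank ℝ E) (F : E → E)
    (hF : ∀ v w : E, ∃ t : ℝ, F v - F w = t • (v - w)) :
    ∃ c : ℝ, ∀ v, F v = F 0 + c • v := by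
  choose l hl using fun v => hF v 0
  have hl' : ∀ v, F v = F 0 + l v • v := fun v => by
    have := hl v
    rw [sub_zero] at this
    rw [← this]; abel
  -- Comparing coefficients in `l v • v - l w • w = t • (v - w)` gives `l v = t = l w`.
  have key : ∀ v w, LinearIndependent ℝ ![v, w] → l v = l w := by
    intro v w hvw
    obtain ⟨t, ht⟩ := hF v w
    rw [hl' v, hl' w] at ht
    obtain ⟨h1, h2⟩ := LinearIndependent.pair_iff.1 hvw (l v - t) (t - l w) (by
      rw [← sub_eq_zero] at ht
      rw [← ht]; module)
    linarith
  have : Nontrivial E := Module.nontrivial_of_finrank_pos (R := ℝ) (by omega)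
  obtain ⟨e, he⟩ := exists_ne (0 : E)
  obtain ⟨y, hy⟩ := exists_linearIndependent_pair_of_one_lt_finrank hE he
  refine ⟨l e, fun v => ?_⟩
  rw [hl' v]
  by_cases hev : LinearIndependent ℝ ![e, v]
  · rw [key e v hev]
  · rw [LinearIndependent.pair_iff' he] at hev
    push Not at hev
    obtain ⟨a, rfl⟩ := hev
    by_cases ha : a = 0
    · simp [ha]
    -- A nonzero multiple of `e` is compared with `e` through the independent vector `y`.
    · have hay : LinearIndependent ℝ ![a • e, y] := by
        rw [LinearIndependent.pair_iff] at hy ⊢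
        intro s t hst
        rw [smul_smul] at hst
        obtain ⟨h1, h2⟩ := hy _ _ hst
        exact ⟨(mul_eq_zero.1 h1).resolve_right ha, h2⟩
      rw [key _ _ hay, key _ _ hy]

theorem sqrt_maxw (d : ℕ) (v : EuclideanSpace ℝ (Fin d)) :
    Real.sqrt (maxw d v)
      = Real.sqrt (Real.pi ^ (-(d : ℝ) / 2)) * Real.exp (-(‖v‖ ^ 2 / 2)) := by
  rw [maxw, Real.sqrt_mul (by positivity)]
  congr 1
  rw [Real.sqrt_eq_iff_mul_self_eq (by positivity) (by positivity), ← Real.exp_add]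
  congr 1
  ring

/-- Up to the constant `π^{-d/4}`, this is `∇(h / √μ) = (∇h + v h) / √μ`. -/
theorem hasFDerivAt_mul_exp {d : ℕ} {h : EuclideanSpace ℝ (Fin d) → ℝ}
    {v : EuclideanSpace ℝ (Fin d)} (hd : DifferentiableAt ℝ h v) :
    HasFDerivAt (fun x => h x * Real.exp (‖x‖ ^ 2 / 2))
      (innerSL ℝ (Real.exp (‖v‖ ^ 2 / 2) • (gradient h v + h v • v))) v := by
  have h1 := hd.hasGradientAt.hasFDerivAt
  have h2 : HasFDerivAt (fun x : EuclideanSpace ℝ (Fin d) => ‖x‖ ^ 2 / 2) (innerSL ℝ v) v := by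
    have := (hasStrictFDerivAt_norm_sq v).hasFDerivAt.mul_const (1 / 2 : ℝ)
    refine (this.congr_fderiv ?_).congr_of_eventuallyEq (.of_forall fun x => ?_)
    · ext x; simp
    · simp; ring
  refine (h1.mul h2.exp).congr_fderiv ?_
  ext x
  simp
  ring

/-- **Characterization of collision invariants:** if `h` is `C¹` on `ℝ^d` (`d ≥ 2`)
and for all `v, v_*` the vector
`√μ(v_*)(∇h(v) + v h(v)) - √μ(v)(∇h(v_*) + v_* h(v_*))` is parallel to `v - v_*`,
then `h(v) = √μ(v) (a + b·v + c|v|²)` for some `a, c ∈ ℝ` and `b ∈ ℝ^d`. -/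
theorem collision_invariants_characterization (d : ℕ) (hd : 2 ≤ d)
    (h : EuclideanSpace ℝ (Fin d) → ℝ) (hreg : ContDiff ℝ 1 h)
    (hpar : ∀ v w : EuclideanSpace ℝ (Fin d), ∃ t : ℝ,
      Real.sqrt (maxw d w) • (gradient h v + h v • v)
          - Real.sqrt (maxw d v) • (gradient h w + h w • w)
        = t • (v - w)) :
    ∃ (a c : ℝ) (b : EuclideanSpace ℝ (Fin d)),
      ∀ v : EuclideanSpace ℝ (Fin d),
        h v = Real.sqrt (maxw d v) * (a + ⟪b, v⟫_ℝ + c * ‖v‖ ^ 2) := by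
  set C : ℝ := Real.sqrt (Real.pi ^ (-(d : ℝ) / 2)) with hC
  have hC0 : C ≠ 0 := by
    have : 0 < C := Real.sqrt_pos.2 (Real.rpow_pos_of_pos Real.pi_pos _)
    exact this.ne'
  let G : EuclideanSpace ℝ (Fin d) → EuclideanSpace ℝ (Fin d) :=
    fun v => Real.exp (‖v‖ ^ 2 / 2) • (gradient h v + h v • v)
  obtain ⟨c, hc⟩ := exists_eq_add_smul_of_parallel
    (by rw [finrank_euclideanSpace_fin]; omega) G (by
      intro v w
      obtain ⟨t, ht⟩ := hpar v w
      rw [sqrt_maxw, sqrt_maxw, ← hC, Real.exp_neg, Real.exp_neg] at ht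
      -- Dividing the hypothesis by `√μ(v) √μ(w)` turns it into parallelism for `G`.
      refine ⟨C⁻¹ * Real.exp (‖v‖ ^ 2 / 2) * Real.exp (‖w‖ ^ 2 / 2) * t, ?_⟩
      have hv := (Real.exp_pos (‖v‖ ^ 2 / 2)).ne'
      have hw := (Real.exp_pos (‖w‖ ^ 2 / 2)).ne'
      rw [mul_smul, ← ht, smul_sub, smul_smul, smul_smul]
      congr 1
      · change Real.exp _ • _ = _
        congr 1; field_simp
      · change Real.exp _ • _ = _
        congr 1; field_simp)
  have hk : ∀ v, HasFDerivAt
      (fun x => h x * Real.exp (‖x‖ ^ 2 / 2) - ⟪G 0, x⟫_ℝ - c / 2 * ‖x‖ ^ 2)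
      (0 : EuclideanSpace ℝ (Fin d) →L[ℝ] ℝ) v := by
    intro v
    have h1 := hasFDerivAt_mul_exp ((hreg.differentiable one_ne_zero) v)
    have h2 := (hasStrictFDerivAt_norm_sq v).hasFDerivAt.const_mul (c / 2)
    refine ((h1.sub (innerSL ℝ (G 0)).hasFDerivAt).sub h2).congr_fderiv ?_
    change innerSL ℝ (G v) - _ - _ = _
    rw [hc v]
    ext x
    simp
    ring
  have hconst := is_const_of_fderiv_eq_zero (fun v => (hk v).differentiableAt)
    (fun v => (hk v).fderiv)
  refine ⟨C⁻¹ * h 0, C⁻¹ * (c / 2), C⁻¹ • G 0, fun v => ?_⟩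
  have h0 := hconst v 0
  simp only [norm_zero, inner_zero_right] at h0
  norm_num at h0
  rw [sqrt_maxw, ← hC, Real.exp_neg, real_inner_smul_left]
  have hv := (Real.exp_pos (‖v‖ ^ 2 / 2)).ne'
  field_simp
  linarith
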